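/- For κ > 0 let G_κ : R^d → R be the smooth-max function G_κ(x) = κ⁻¹ ln(Σ_{j=1}^d e^{κ x_j}). Then for every v, x, y, z ∈ R^d, the third derivative of G_κ at v applied to (x, y, z) satisfies |G_κ'''(v)(x, y, z)| ≤ 6κ² ‖x‖_∞ ‖y‖_∞ ‖z‖_∞, where ‖·‖_∞ is the maximum norm on R^d. -/

import Mathlib

/-!
The gradient of `smoothMax` at `u` is the softmax average `y ↦ m(y) = ∑ j, p j * y j`, where the
weights `p j = exp (κ u j) / ∑ k, exp (κ u k)` are nonnegative and sum to one. The weights satisfy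
`p j' (x) = κ * p j * (x j - m(x))` (`softWeight_hasFDerivAt`), so differentiating twice more gives
`G''(y, z) = κ ∑ j, p j * (y j - m(y)) * z j` and
`G'''(x, y, z) = κ² ∑ j, p j * ((x j - m(x)) * (y j - m(y)) - ∑ k, p k * (x k - m(x)) * y k) * z j`.
Since `|x j - m(x)| ≤ 2‖x‖`, the bracket is at most `(4 + 2) ‖x‖ ‖y‖` in absolute value, and
averaging against `p` gives the constant `6`.
-/

open Real

/-- The smooth-max function `G_κ(x) = κ⁻¹ ln(Σ_j exp(κ x_j))`. -/
noncomputable def smoothMax (d : ℕ) (κ : ℝ) (x : Fin d → ℝ) : ℝ :=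
  κ⁻¹ * Real.log (∑ j, Real.exp (κ * x j))

/-- The softmax weight `exp (κ u j) / ∑ k, exp (κ u k)`. -/
noncomputable def softWeight (d : ℕ) (κ : ℝ) (j : Fin d) (u : Fin d → ℝ) : ℝ :=
  Real.exp (κ * u j) / ∑ k, Real.exp (κ * u k)

/-- The softmax average `y ↦ ∑ j, p j * y j` as a continuous linear form. -/
noncomputable def softMean (d : ℕ) (κ : ℝ) (u : Fin d → ℝ) : (Fin d → ℝ) →L[ℝ] ℝ :=
  ∑ j, softWeight d κ j u • ContinuousLinearMap.proj (R := ℝ) (φ := fun _ : Fin d => ℝ) j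

lemma softMean_apply (d : ℕ) (κ : ℝ) (u y : Fin d → ℝ) :
    softMean d κ u y = ∑ j, softWeight d κ j u * y j := by
  simp [softMean]

lemma sum_exp_pos (d : ℕ) [NeZero d] (κ : ℝ) (u : Fin d → ℝ) :
    0 < ∑ j, Real.exp (κ * u j) :=
  Finset.sum_pos (fun _ _ => Real.exp_pos _) Finset.univ_nonempty

lemma softWeight_nonneg (d : ℕ) (κ : ℝ) (j : Fin d) (u : Fin d → ℝ) :
    0 ≤ softWeight d κ j u :=
  div_nonneg (Real.exp_pos _).le (Finset.sum_nonneg fun _ _ => (Real.exp_pos _).le)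

lemma softWeight_sum (d : ℕ) [NeZero d] (κ : ℝ) (u : Fin d → ℝ) :
    ∑ j, softWeight d κ j u = 1 := by
  unfold softWeight
  rw [← Finset.sum_div, div_self (sum_exp_pos d κ u).ne']

lemma exp_hasFDerivAt (d : ℕ) (κ : ℝ) (j : Fin d) (u : Fin d → ℝ) :
    HasFDerivAt (fun u : Fin d → ℝ => Real.exp (κ * u j))
      (Real.exp (κ * u j) • κ • ContinuousLinearMap.proj (R := ℝ) (φ := fun _ : Fin d => ℝ) j) u :=
  (((ContinuousLinearMap.proj (R := ℝ) (φ := fun _ : Fin d => ℝ) j).hasFDerivAt).const_mul κ).exp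

lemma sum_exp_hasFDerivAt (d : ℕ) [NeZero d] (κ : ℝ) (u : Fin d → ℝ) :
    HasFDerivAt (fun u : Fin d → ℝ => ∑ j, Real.exp (κ * u j))
      ((κ * ∑ j, Real.exp (κ * u j)) • softMean d κ u) u := by
  refine HasFDerivAt.congr_fderiv (HasFDerivAt.fun_sum (u := Finset.univ) fun j _ => exp_hasFDerivAt d κ j u) ?_
  refine ContinuousLinearMap.ext fun y => ?_
  have := (sum_exp_pos d κ u).ne'
  simp only [smul_apply, softMean_apply, softWeight, smul_eq_mul,
    sum_apply, ContinuousLinearMap.proj_apply, Finset.mul_sum]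
  refine Finset.sum_congr rfl fun j _ => ?_
  rw [← Finset.mul_sum]
  field_simp

lemma smoothMax_hasFDerivAt (d : ℕ) [NeZero d] (κ : ℝ) (hκ : 0 < κ) (u : Fin d → ℝ) :
    HasFDerivAt (smoothMax d κ) (softMean d κ u) u := by
  have hS := (sum_exp_pos d κ u).ne'
  refine HasFDerivAt.congr_fderiv (((sum_exp_hasFDerivAt d κ u).log hS).const_mul κ⁻¹) ?_
  refine ContinuousLinearMap.ext fun y => ?_
  simp only [smul_apply, smul_eq_mul]
  field_simp

/-- The derivative of a softmax weight is `x ↦ κ * p j * (x j - m(x))`. -/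
lemma softWeight_hasFDerivAt (d : ℕ) [NeZero d] (κ : ℝ) (j : Fin d) (u : Fin d → ℝ) :
    HasFDerivAt (softWeight d κ j)
      ((κ * softWeight d κ j u) •
        (ContinuousLinearMap.proj (R := ℝ) (φ := fun _ : Fin d => ℝ) j - softMean d κ u)) u := by
  have hS := (sum_exp_pos d κ u).ne'
  refine HasFDerivAt.congr_fderiv ((exp_hasFDerivAt d κ j u).fun_mul
    ((hasDerivAt_inv hS).comp_hasFDerivAt u (sum_exp_hasFDerivAt d κ u))) ?_
  refine ContinuousLinearMap.ext fun y => ?_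
  simp only [add_apply, smul_apply, smul_eq_mul, sub_apply,
    ContinuousLinearMap.proj_apply, softWeight]
  field_simp
  ring

lemma softMean_contDiff (d : ℕ) [NeZero d] (κ : ℝ) : ContDiff ℝ 2 (softMean d κ) := by
  unfold softMean softWeight
  refine ContDiff.sum fun j _ => ContDiff.fun_smul (ContDiff.div ?_ ?_ ?_) contDiff_const
  · fun_prop
  · fun_prop
  · exact fun u => (sum_exp_pos d κ u).ne'

lemma softMean_apply_hasFDerivAt (d : ℕ) [NeZero d] (κ : ℝ) (u z : Fin d → ℝ) :
    HasFDerivAt (fun u => softMean d κ u z)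
      (∑ j, z j • (κ * softWeight d κ j u) •
        (ContinuousLinearMap.proj (R := ℝ) (φ := fun _ : Fin d => ℝ) j - softMean d κ u)) u := by
  simp only [softMean_apply]
  exact HasFDerivAt.fun_sum fun j _ => (softWeight_hasFDerivAt d κ j u).mul_const (z j)

lemma fderiv_softMean_apply (d : ℕ) [NeZero d] (κ : ℝ) (u y z : Fin d → ℝ) :
    fderiv ℝ (softMean d κ) u y z
      = ∑ j, κ * softWeight d κ j u * (y j - softMean d κ u y) * z j := by
  have hd : DifferentiableAt ℝ (softMean d κ) u :=
    (softMean_contDiff d κ).differentiable (by norm_num) u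
  have h := (hd.hasFDerivAt.clm_apply (hasFDerivAt_const z u)).unique
    (softMean_apply_hasFDerivAt d κ u z)
  have := congrArg (fun L => L y) h
  simp at this
  rw [this]
  exact Finset.sum_congr rfl fun j _ => by ring

lemma fderiv_fderiv_softMean_apply (d : ℕ) [NeZero d] (κ : ℝ) (v x y z : Fin d → ℝ) :
    fderiv ℝ (fderiv ℝ (softMean d κ)) v x y z
      = ∑ j, softWeight d κ j v * (κ ^ 2 * ((x j - softMean d κ v x) * (y j - softMean d κ v y)
          - ∑ k, softWeight d κ k v * ((x k - softMean d κ v x) * y k)) * z j) := by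
  have hd : DifferentiableAt ℝ (fderiv ℝ (softMean d κ)) v :=
    ((softMean_contDiff d κ).fderiv_right (m := 1) (by norm_num)).differentiable (by norm_num) v
  have h1 := (hd.hasFDerivAt.clm_apply (hasFDerivAt_const y v)).clm_apply (hasFDerivAt_const z v)
  simp only [fderiv_softMean_apply] at h1
  have h2 := HasFDerivAt.fun_sum (u := Finset.univ) fun j _ =>
    (((softWeight_hasFDerivAt d κ j v).const_mul κ).fun_mul
      ((softMean_apply_hasFDerivAt d κ v y).const_sub (y j))).mul_const (z j)
  have := congrArg (fun L => L x) (h1.unique h2)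
  simp at this
  rw [this]
  refine Finset.sum_congr rfl fun j _ => ?_
  have : ∑ k, y k * (κ * softWeight d κ k v * (x k - softMean d κ v x))
      = κ * ∑ k, softWeight d κ k v * ((x k - softMean d κ v x) * y k) := by
    rw [Finset.mul_sum]
    exact Finset.sum_congr rfl fun k _ => by ring
  rw [this]
  ring

lemma abs_softWeight_sum_le (d : ℕ) [NeZero d] (κ : ℝ) (u a : Fin d → ℝ) (C : ℝ)
    (h : ∀ j, |a j| ≤ C) : |∑ j, softWeight d κ j u * a j| ≤ C := by
  calc |∑ j, softWeight d κ j u * a j|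
      ≤ ∑ j, |softWeight d κ j u * a j| := Finset.abs_sum_le_sum_abs _ _
    _ ≤ ∑ j, softWeight d κ j u * C := Finset.sum_le_sum fun j _ => by
        rw [abs_mul, abs_of_nonneg (softWeight_nonneg d κ j u)]
        exact mul_le_mul_of_nonneg_left (h j) (softWeight_nonneg d κ j u)
    _ = C := by rw [← Finset.sum_mul, softWeight_sum, one_mul]

lemma abs_sub_softMean_le (d : ℕ) [NeZero d] (κ : ℝ) (u x : Fin d → ℝ) (j : Fin d) :
    |x j - softMean d κ u x| ≤ 2 * ‖x‖ := by
  have h1 : |x j| ≤ ‖x‖ := norm_le_pi_norm x j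
  have h2 : |softMean d κ u x| ≤ ‖x‖ := by
    rw [softMean_apply]
    exact abs_softWeight_sum_le d κ u x _ fun k => norm_le_pi_norm x k
  linarith [abs_sub (x j) (softMean d κ u x)]

/-- The third Fréchet derivative of the smooth-max function satisfies
`|G_κ'''(v)(x, y, z)| ≤ 6κ² ‖x‖_∞ ‖y‖_∞ ‖z‖_∞` (the norm on `Fin d → ℝ` is the
maximum norm). -/
theorem stmt_10 (d : ℕ) (κ : ℝ) (hκ : 0 < κ) (v x y z : Fin d → ℝ) :
    |fderiv ℝ (fderiv ℝ (fderiv ℝ (smoothMax d κ))) v x y z| ≤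
      6 * κ ^ 2 * ‖x‖ * ‖y‖ * ‖z‖ := by
  rcases Nat.eq_zero_or_pos d with rfl | hd
  · -- `Fin 0 → ℝ` is the zero space, so both sides vanish.
    have hz : z = 0 := Subsingleton.elim _ _
    rw [hz, map_zero, abs_zero, norm_zero, mul_zero]
  have : NeZero d := ⟨hd.ne'⟩
  have hG : fderiv ℝ (smoothMax d κ) = softMean d κ :=
    funext fun u => (smoothMax_hasFDerivAt d κ hκ u).fderiv
  rw [hG, fderiv_fderiv_softMean_apply]
  refine abs_softWeight_sum_le d κ v _ _ fun j => ?_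
  have hcov : |∑ k, softWeight d κ k v * ((x k - softMean d κ v x) * y k)| ≤ 2 * ‖x‖ * ‖y‖ :=
    abs_softWeight_sum_le d κ v _ _ fun k => by
      rw [abs_mul]
      exact mul_le_mul (abs_sub_softMean_le d κ v x k) (norm_le_pi_norm y k) (abs_nonneg _)
        (by positivity)
  have hprod : |(x j - softMean d κ v x) * (y j - softMean d κ v y)| ≤ 2 * ‖x‖ * (2 * ‖y‖) := by
    rw [abs_mul]
    exact mul_le_mul (abs_sub_softMean_le d κ v x j) (abs_sub_softMean_le d κ v y j)
      (abs_nonneg _) (by positivity)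
  have hbr := (abs_sub _ _).trans (add_le_add hprod hcov)
  rw [abs_mul, abs_mul, abs_of_nonneg (sq_nonneg κ)]
  calc _ ≤ κ ^ 2 * (2 * ‖x‖ * (2 * ‖y‖) + 2 * ‖x‖ * ‖y‖) * ‖z‖ :=
        mul_le_mul (mul_le_mul_of_nonneg_left hbr (sq_nonneg κ)) (norm_le_pi_norm z j)
          (abs_nonneg _) (by positivity)
    _ = _ := by ring
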